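/- Let X be an ∞-pseudo-metric space, let m ≥ 1 be an integer, let R_1, …, R_m > 0 and D > 0, and suppose X admits a decomposition X = ⋃_{i=1}^m X^i where each X^i is the union of an R_i-disjoint family of subsets of X each of diameter at most D. Let {X_s}_{s∈S} be a family of subsets of X with chosen basepoints x_s ∈ X_s. Then there is D' > 0 such that the wedge ⋁_{s∈S}(X_s, x_s) admits a decomposition into m subsets Y^1, …, Y^m where each Y^i is the union of an R_i-disjoint family of subsets each of diameter at most D'. -/

import Mathlib

open scoped ENNReal

open Classical in
/-- The wedge `∞`-pseudo-distance on the disjoint union of pointed `∞`-pseudo-metric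
spaces `(Y_s, p_s)`: within one component it is the original distance, across components
it is `d(a, p_s) + d(p_t, b)`. -/
noncomputable def wedgeEDist {S : Type} {Y : S → Type} [∀ s, PseudoEMetricSpace (Y s)]
    (p : ∀ s, Y s) : (Σ s, Y s) → (Σ s, Y s) → ℝ≥0∞
  | ⟨s, a⟩, ⟨t, b⟩ =>
    if h : s = t then edist a (h.symm ▸ b) else edist a (p s) + edist (p t) b

/-! In each component `Y_s`, the pieces of the given family that come within `r` of the basepoint
`p_s` are merged, over all `s`, into one central piece, which lies within `r + D` of the
basepoints; the remaining pieces are kept. Distances between different components are measured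
through the basepoints, so a piece at distance at least `r` from its basepoint is at distance at
least `r` from all other components; it is `r`-disjoint from the other pieces of its own component
by hypothesis. -/

/-- An `r`-disjoint family `𝓐` of sets, for a distance function `d`. The distance is an explicit
argument because the wedge carries only the function `wedgeEDist`, not an instance. -/
def IsDisjointFamily {α : Type*} (d : α → α → ℝ≥0∞) (r : ℝ≥0∞) (𝓐 : Set (Set α)) : Prop :=
  ∀ A ∈ 𝓐, ∀ B ∈ 𝓐, A ≠ B → ∀ a ∈ A, ∀ b ∈ B, r ≤ d a b

/-- A family `𝓐` of sets of diameter at most `D`, for a distance function `d` (explicit for the same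
reason as in `IsDisjointFamily`). -/
def IsBoundedFamily {α : Type*} (d : α → α → ℝ≥0∞) (D : ℝ≥0∞) (𝓐 : Set (Set α)) : Prop :=
  ∀ A ∈ 𝓐, ∀ a ∈ A, ∀ b ∈ A, d a b ≤ D

section Families

variable {α β : Type*} {d : α → α → ℝ≥0∞} {r D D' : ℝ≥0∞} {𝓐 : Set (Set α)}

theorem IsDisjointFamily.preimage (h : IsDisjointFamily d r 𝓐) (f : β → α) :
    IsDisjointFamily (fun x y => d (f x) (f y)) r ((f ⁻¹' ·) '' 𝓐) := by
  rintro _ ⟨A, hA, rfl⟩ _ ⟨B, hB, rfl⟩ hne x hx y hy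
  exact h A hA B hB (ne_of_apply_ne _ hne) _ hx _ hy

theorem IsBoundedFamily.preimage (h : IsBoundedFamily d D 𝓐) (f : β → α) :
    IsBoundedFamily (fun x y => d (f x) (f y)) D ((f ⁻¹' ·) '' 𝓐) := by
  rintro _ ⟨A, hA, rfl⟩ x hx y hy
  exact h A hA _ hx _ hy

theorem IsBoundedFamily.mono (h : IsBoundedFamily d D 𝓐) (hD : D ≤ D') :
    IsBoundedFamily d D' 𝓐 :=
  fun A hA a ha b hb => (h A hA a ha b hb).trans hD

theorem IsBoundedFamily.of_ediam_le [PseudoEMetricSpace α] (h : ∀ A ∈ 𝓐, Metric.ediam A ≤ D) :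
    IsBoundedFamily edist D 𝓐 :=
  fun A hA _ ha _ hb => (Metric.edist_le_ediam_of_mem ha hb).trans (h A hA)

end Families

theorem iUnion_sUnion_image_preimage_eq_univ {ι : Sort*} {α β : Type*} {F : ι → Set (Set α)}
    (hF : ⋃ i, ⋃₀ F i = Set.univ) (f : β → α) :
    ⋃ i, ⋃₀ ((f ⁻¹' ·) '' F i) = Set.univ := by
  simp_rw [Set.sUnion_image, ← Set.preimage_sUnion, ← Set.preimage_iUnion, hF, Set.preimage_univ]

section Wedge

variable {S : Type} {Y : S → Type} [∀ s, PseudoEMetricSpace (Y s)] (p : ∀ s, Y s)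

theorem wedgeEDist_mk_same (s : S) (a b : Y s) : wedgeEDist p ⟨s, a⟩ ⟨s, b⟩ = edist a b := by
  simp [wedgeEDist]

theorem wedgeEDist_mk_of_ne {s t : S} (h : s ≠ t) (a : Y s) (b : Y t) :
    wedgeEDist p ⟨s, a⟩ ⟨t, b⟩ = edist a (p s) + edist (p t) b := by
  simp [wedgeEDist, h]

theorem wedgeEDist_comm (u v : Σ s, Y s) : wedgeEDist p u v = wedgeEDist p v u := by
  obtain ⟨s, a⟩ := u
  obtain ⟨t, b⟩ := v
  by_cases h : s = t
  · subst h
    simp only [wedgeEDist_mk_same, edist_comm]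
  · rw [wedgeEDist_mk_of_ne p h, wedgeEDist_mk_of_ne p (Ne.symm h), add_comm, edist_comm b,
      edist_comm a]

theorem wedgeEDist_le_edist_add_edist (u v : Σ s, Y s) :
    wedgeEDist p u v ≤ edist u.2 (p u.1) + edist (p v.1) v.2 := by
  obtain ⟨s, a⟩ := u
  obtain ⟨t, b⟩ := v
  by_cases h : s = t
  · subst h
    rw [wedgeEDist_mk_same]
    exact edist_triangle _ _ _
  · exact (wedgeEDist_mk_of_ne p h a b).le

/-- The central piece of the wedge: the union, over all components, of the pieces that come
within `r` of the basepoint. -/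
def wedgeCore (r : ℝ≥0∞) (F : ∀ s, Set (Set (Y s))) : Set (Σ s, Y s) :=
  {u | ∃ A ∈ F u.1, u.2 ∈ A ∧ Metric.infEDist (p u.1) A < r}

/-- The family on the wedge obtained from families `F s` on the components: the central piece,
together with the pieces at distance at least `r` from the basepoint of their component. -/
def wedgeFamily (r : ℝ≥0∞) (F : ∀ s, Set (Set (Y s))) : Set (Set (Σ s, Y s)) :=
  insert (wedgeCore p r F)
    {T | ∃ s, ∃ A ∈ F s, r ≤ Metric.infEDist (p s) A ∧ Sigma.mk s '' A = T}

variable {p} {r D : ℝ≥0∞} {F : ∀ s, Set (Set (Y s))}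

theorem mem_sUnion_wedgeFamily {u : Σ s, Y s} (hu : u.2 ∈ ⋃₀ F u.1) :
    u ∈ ⋃₀ wedgeFamily p r F := by
  obtain ⟨A, hA, huA⟩ := hu
  rcases lt_or_ge (Metric.infEDist (p u.1) A) r with hnear | hfar
  · exact ⟨wedgeCore p r F, Set.mem_insert _ _, A, hA, huA, hnear⟩
  · exact ⟨Sigma.mk u.1 '' A, Set.mem_insert_of_mem _ ⟨u.1, A, hA, hfar, rfl⟩, u.2, huA, rfl⟩

theorem edist_basepoint_le_of_mem_wedgeCore (hF : ∀ s, IsBoundedFamily edist D (F s))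
    {u : Σ s, Y s} (hu : u ∈ wedgeCore p r F) : edist (p u.1) u.2 ≤ r + D := by
  obtain ⟨A, hA, huA, hnear⟩ := hu
  obtain ⟨a, haA, ha⟩ := Metric.infEDist_lt_iff.1 hnear
  calc edist (p u.1) u.2 ≤ edist (p u.1) a + edist a u.2 := edist_triangle _ _ _
    _ ≤ r + D := add_le_add ha.le (hF _ A hA a haA _ huA)

theorem wedgeEDist_le_of_mem_wedgeCore (hF : ∀ s, IsBoundedFamily edist D (F s))
    {u v : Σ s, Y s} (hu : u ∈ wedgeCore p r F) (hv : v ∈ wedgeCore p r F) :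
    wedgeEDist p u v ≤ 2 * (r + D) :=
  calc wedgeEDist p u v ≤ edist u.2 (p u.1) + edist (p v.1) v.2 :=
      wedgeEDist_le_edist_add_edist p u v
    _ ≤ (r + D) + (r + D) := by
      rw [edist_comm u.2]
      exact add_le_add (edist_basepoint_le_of_mem_wedgeCore hF hu)
        (edist_basepoint_le_of_mem_wedgeCore hF hv)
    _ = 2 * (r + D) := (two_mul _).symm

theorem le_wedgeEDist_of_le_infEDist (hF : ∀ s, IsDisjointFamily edist r (F s)) {s t : S}
    {A : Set (Y s)} {B : Set (Y t)} (hA : A ∈ F s) (hB : B ∈ F t)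
    (hfar : r ≤ Metric.infEDist (p s) A) (hne : (⟨s, A⟩ : Σ s, Set (Y s)) ≠ ⟨t, B⟩)
    {a : Y s} (ha : a ∈ A) {b : Y t} (hb : b ∈ B) :
    r ≤ wedgeEDist p ⟨s, a⟩ ⟨t, b⟩ := by
  by_cases hst : s = t
  · subst hst
    rw [wedgeEDist_mk_same]
    exact hF s A hA B hB (ne_of_apply_ne _ hne) a ha b hb
  · calc r ≤ edist (p s) a := Metric.le_infEDist.1 hfar a ha
      _ = edist a (p s) := edist_comm _ _
      _ ≤ edist a (p s) + edist (p t) b := le_self_add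
      _ = wedgeEDist p ⟨s, a⟩ ⟨t, b⟩ := (wedgeEDist_mk_of_ne p hst a b).symm

theorem le_wedgeEDist_of_mem_wedgeCore (hF : ∀ s, IsDisjointFamily edist r (F s)) {s : S}
    {A : Set (Y s)} (hA : A ∈ F s) (hfar : r ≤ Metric.infEDist (p s) A) {a : Y s} (ha : a ∈ A)
    {v : Σ s, Y s} (hv : v ∈ wedgeCore p r F) : r ≤ wedgeEDist p ⟨s, a⟩ v := by
  obtain ⟨B, hB, hvB, hnear⟩ := hv
  refine le_wedgeEDist_of_le_infEDist hF hA hB hfar ?_ ha hvB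
  rintro ⟨⟩
  exact hfar.not_gt hnear

theorem isDisjointFamily_wedgeFamily (hF : ∀ s, IsDisjointFamily edist r (F s)) :
    IsDisjointFamily (wedgeEDist p) r (wedgeFamily p r F) := by
  rintro _ (rfl | ⟨s, A, hA, hAfar, rfl⟩) _ (rfl | ⟨t, B, hB, hBfar, rfl⟩) hne u hu v hv
  · exact absurd rfl hne
  · obtain ⟨b, hb, rfl⟩ := hv
    rw [wedgeEDist_comm]
    exact le_wedgeEDist_of_mem_wedgeCore hF hB hBfar hb hu
  · obtain ⟨a, ha, rfl⟩ := hu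
    exact le_wedgeEDist_of_mem_wedgeCore hF hA hAfar ha hv
  · obtain ⟨a, ha, rfl⟩ := hu
    obtain ⟨b, hb, rfl⟩ := hv
    exact le_wedgeEDist_of_le_infEDist hF hA hB hAfar
      (ne_of_apply_ne (fun P : Σ s, Set (Y s) => Sigma.mk P.1 '' P.2) hne) ha hb

theorem isBoundedFamily_wedgeFamily (hF : ∀ s, IsBoundedFamily edist D (F s)) :
    IsBoundedFamily (wedgeEDist p) (2 * (r + D)) (wedgeFamily p r F) := by
  rintro _ (rfl | ⟨s, A, hA, -, rfl⟩) u hu v hv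
  · exact wedgeEDist_le_of_mem_wedgeCore hF hu hv
  · obtain ⟨a, ha, rfl⟩ := hu
    obtain ⟨b, hb, rfl⟩ := hv
    calc wedgeEDist p ⟨s, a⟩ ⟨s, b⟩ = edist a b := wedgeEDist_mk_same p s a b
      _ ≤ D := hF s A hA a ha b hb
      _ ≤ r + D := le_add_self
      _ ≤ 2 * (r + D) := le_mul_of_one_le_left' one_le_two

end Wedge

theorem stmt17_general {S : Type} {Y : S → Type} [∀ s, PseudoEMetricSpace (Y s)] (p : ∀ s, Y s)
    {ι : Type*} {R : ι → ℝ} (hR : BddAbove (Set.range R)) {D : ℝ}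
    {F : ∀ s, ι → Set (Set (Y s))} (hcover : ∀ s, ⋃ i, ⋃₀ F s i = Set.univ)
    (hdisj : ∀ s i, IsDisjointFamily edist (ENNReal.ofReal (R i)) (F s i))
    (hbdd : ∀ s i, IsBoundedFamily edist (ENNReal.ofReal D) (F s i)) :
    ∃ D' : ℝ, 0 < D' ∧ ∃ G : ι → Set (Set (Σ s, Y s)),
      ⋃ i, ⋃₀ G i = Set.univ ∧
      (∀ i, IsDisjointFamily (wedgeEDist p) (ENNReal.ofReal (R i)) (G i)) ∧
      ∀ i, IsBoundedFamily (wedgeEDist p) (ENNReal.ofReal D') (G i) := by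
  obtain ⟨M, hM⟩ := hR
  have hbound (i : ι) : 2 * (ENNReal.ofReal (R i) + ENNReal.ofReal D) ≤
      ENNReal.ofReal (2 * (max M 1 + |D|)) := by
    have hRM : R i ≤ max M 1 := (hM (Set.mem_range_self i)).trans (le_max_left M 1)
    calc 2 * (ENNReal.ofReal (R i) + ENNReal.ofReal D)
        ≤ 2 * (ENNReal.ofReal (max M 1) + ENNReal.ofReal |D|) := by gcongr; exact le_abs_self D
      _ = ENNReal.ofReal (2 * (max M 1 + |D|)) := by
        rw [← ENNReal.ofReal_add (by positivity) (abs_nonneg D), ENNReal.ofReal_mul zero_le_two,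
          ENNReal.ofReal_ofNat]
  refine ⟨2 * (max M 1 + |D|), by positivity,
    fun i => wedgeFamily p (ENNReal.ofReal (R i)) fun s => F s i, ?_,
    fun i => isDisjointFamily_wedgeFamily fun s => hdisj s i,
    fun i => (isBoundedFamily_wedgeFamily fun s => hbdd s i).mono (hbound i)⟩
  refine Set.eq_univ_of_forall fun u => ?_
  obtain ⟨i, hi⟩ := Set.mem_iUnion.1 (Set.eq_univ_iff_forall.1 (hcover u.1) u.2)
  exact Set.mem_iUnion.2 ⟨i, mem_sUnion_wedgeFamily hi⟩

/-- If `X = ⋃_{i=1}^m X^i` where each `X^i` is a union of an `R_i`-disjoint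
family of sets of diameter at most `D`, and `{X_s}` is a family of subsets of `X` with
basepoints `x_s ∈ X_s`, then there is `D' > 0` such that the wedge `⋁_s (X_s, x_s)`
decomposes into `m` subsets, the `i`-th being a union of an `R_i`-disjoint family of sets
of diameter at most `D'` (with respect to the wedge distance). -/
theorem stmt17 {X : Type} [PseudoEMetricSpace X] (m : ℕ) (hm : 1 ≤ m)
    (R : Fin m → ℝ) (hR : ∀ i, 0 < R i) (D : ℝ) (hD : 0 < D)
    (F : Fin m → Set (Set X))
    (hcover : (⋃ i, ⋃₀ F i) = Set.univ)
    (hdisj : ∀ i, ∀ A ∈ F i, ∀ B ∈ F i, A ≠ B → ∀ x ∈ A, ∀ y ∈ B,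
      ENNReal.ofReal (R i) ≤ edist x y)
    (hbdd : ∀ i, ∀ A ∈ F i, EMetric.diam A ≤ ENNReal.ofReal D)
    (S : Type) (Xs : S → Set X) (x : S → X) (hx : ∀ s, x s ∈ Xs s) :
    ∃ D' : ℝ, 0 < D' ∧ ∃ G : Fin m → Set (Set (Σ s, ↥(Xs s))),
      (⋃ i, ⋃₀ G i) = Set.univ ∧
      (∀ i, ∀ A ∈ G i, ∀ B ∈ G i, A ≠ B → ∀ u ∈ A, ∀ v ∈ B,
        ENNReal.ofReal (R i) ≤
          wedgeEDist (Y := fun s => ↥(Xs s)) (fun s => ⟨x s, hx s⟩) u v) ∧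
      (∀ i, ∀ A ∈ G i, ∀ u ∈ A, ∀ v ∈ A,
        wedgeEDist (Y := fun s => ↥(Xs s)) (fun s => ⟨x s, hx s⟩) u v
          ≤ ENNReal.ofReal D') := by
  exact stmt17_general (fun s => (⟨x s, hx s⟩ : Xs s)) (Set.finite_range R).bddAbove
    (fun _ => iUnion_sUnion_image_preimage_eq_univ hcover Subtype.val)
    (fun _ i => IsDisjointFamily.preimage (hdisj i) Subtype.val)
    (fun _ i => (IsBoundedFamily.of_ediam_le (hbdd i)).preimage Subtype.val)
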